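/- Let n, k be positive integers with n ≥ k, let R be a Haar-distributed random matrix from the real orthogonal group O(2n), and set Ṽ = (ṽ_{ij}) = Rᵀ J R, where J = ((O, I_n), (−I_n, O)); this encodes the random matrix V = (J Rᵀ Jᵀ) R associated with the symmetric space O(2n)/U(n) via ṽ_{ij} = (J V)_{ij}. If k is even, then for any sequence i = (i_1,…,i_{2k}) in {1,…,2n}, E[ ṽ_{i_1 i_2} ṽ_{i_3 i_4} ⋯ ṽ_{i_{2k−1} i_{2k}} ] = Σ_{σ ∈ M_{2k}} Δ_σ(i) Wg^{DIII}(σ; n), where Wg^{DIII}(·; n) := T^{DIII}_n ⋆ Wg^O(·; 2n) and T^{DIII}_n(σ) = Σ_{p_1,…,p_{2k} ∈ {1,…,2n}} Δ_σ(p) Π_{r=1}^k J_{p_{2r−1}, p_{2r}}. If k is odd, then E[ ṽ_{i_1 i_2} ⋯ ṽ_{i_{2k−1} i_{2k}} ] = 0 for every sequence i. -/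

import Mathlib

/-!
The entries of `Rᵀ J R` expand as `∑_p ∏_r J_{p_{2r-1} p_{2r}} ∏_j R_{p_j i_j}`, so for even `k`
everything reduces to the Weingarten formula for `O(N)`, `N = 2n` (`integral_prod_entries`):
`E ∏_j R_{p_j i_j} = ∑_{σ,τ ∈ M_{2k}} Δ_σ(p) Wg(σ⁻¹ τ) Δ_τ(i)`.

For fixed `i`, both sides of that formula are tensors in `(ℝ^N)^{⊗ 2k}`, indexed by `p`, that are
fixed by `O(N)`. They have the same inner product with every `Δ_ρ`: the left side gives `Δ_ρ(i)`
because `RᵀR = 1`, the right side because `⟨Δ_ρ, Δ_σ⟩ = N^{c(ρ⁻¹σ)}` (`sum_DeltaO_mul`) and `Wg` is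
the convolution inverse of `N^{c(·)}`; the sums over `M_{2k}` can be translated since `M_{2k}` is a
transversal of `S_{2k}/H_k` (`existsUnique_Mset`, `sum_Mset_translate`).
The difference vanishes because invariant tensors are spanned by the `Δ_σ`
(`OInvariant.eq_sum`).

This last fact is elementary when `k < N`. Subtracting a combination of the `Δ_σ`, one may assume
that the invariant `f` vanishes at every `p` whose values all occur exactly twice. A value
occurring once forces `f p = 0` by a sign change; a value `a` occurring `m ≥ 3` times is mixed
with an unused value `b` by a reflection with entries `3/5, 4/5`, which yields
`(1 - (3/5)^m - (4/5)^m) f p = 0` by induction on the number of unused values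
(`OInvariant.eq_zero`).

For odd `k`, left translation by `diag(I_n, -I_n)` turns `J` into `-J`, so the expectation equals
its own negative.
-/

/-!
Weingarten calculus for classical compact Lie groups and compact symmetric spaces
(S. Matsumoto, "Weingarten calculus for matrix ensembles associated with compact
symmetric spaces"): common definitions.

We index `{1,…,m}` by `Fin m` (0-indexed), so the pair `{2r-1, 2r}` becomes
`{2r, 2r+1}` for `r ∈ Fin k`.
-/

open MeasureTheory Finset Matrix

namespace WgPaper

/-- `lo r` is the (0-indexed) point `2r`, i.e. `2r - 1` in 1-indexed notation. -/
def lo {k : ℕ} (i : Fin k) : Fin (2 * k) := ⟨2 * (i : ℕ), by have := i.isLt; omega⟩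

/-- `hi r` is the (0-indexed) point `2r + 1`, i.e. `2r` in 1-indexed notation. -/
def hi {k : ℕ} (i : Fin k) : Fin (2 * k) := ⟨2 * (i : ℕ) + 1, by have := i.isLt; omega⟩

/-- Number of cycles of a permutation, counting fixed points as 1-cycles. -/
def cyc {m : ℕ} (σ : Equiv.Perm (Fin m)) : ℕ :=
  Multiset.card σ.cycleType + (Finset.univ.filter fun x => σ x = x).card

/-- Number of even-length cycles of a permutation. -/
def evenCycles {m : ℕ} (σ : Equiv.Perm (Fin m)) : ℕ :=
  Multiset.card (σ.cycleType.filter fun d => d % 2 = 0)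

/-- Number of odd-length cycles of a permutation, counting fixed points as 1-cycles. -/
def oddCycles {m : ℕ} (σ : Equiv.Perm (Fin m)) : ℕ :=
  Multiset.card (σ.cycleType.filter fun d => d % 2 = 1)
    + (Finset.univ.filter fun x => σ x = x).card

/-- The sign `ε(σ)` of a permutation, as an element of a commutative ring. -/
def sgn (R : Type*) [CommRing R] {m : ℕ} (σ : Equiv.Perm (Fin m)) : R :=
  ((Equiv.Perm.sign σ : ℤ) : R)

/-- Full convolution on a finite group: `(f * g)(σ) = ∑_τ f(τ) g(τ⁻¹ σ)`. -/
def conv {G : Type*} [Group G] [Fintype G] {R : Type*} [CommRing R] (f g : G → R) : G → R :=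
  fun σ => ∑ τ : G, f τ * g (τ⁻¹ * σ)

/-- The Dirac function at the identity permutation. -/
def deltaId {m : ℕ} {R : Type*} [CommRing R] : Equiv.Perm (Fin m) → R :=
  fun σ => if σ = 1 then 1 else 0

/-- The graph `Γ(σ)` on `{1,…,2k}` whose edges are `{2r-1, 2r}` and `{σ(2r-1), σ(2r)}`
(in 1-indexed notation) for `1 ≤ r ≤ k`. -/
def Gamma {k : ℕ} (σ : Equiv.Perm (Fin (2 * k))) : SimpleGraph (Fin (2 * k)) :=
  SimpleGraph.fromRel fun a b =>
    (∃ r : Fin k, a = lo r ∧ b = hi r) ∨ ∃ r : Fin k, a = σ (lo r) ∧ b = σ (hi r)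

/-- `c(σ)`, the number of connected components of `Γ(σ)`. -/
noncomputable def ccount {k : ℕ} (σ : Equiv.Perm (Fin (2 * k))) : ℕ :=
  Nat.card (Gamma σ).ConnectedComponent

/-- The number of vertices of a connected component of a graph. -/
noncomputable def compSize {V : Type*} {G : SimpleGraph V} (C : G.ConnectedComponent) : ℕ :=
  Nat.card {v // G.connectedComponentMk v = C}

/-- `ℓe(σ)`: the number of connected components of `Γ(σ)` whose size is `≡ 0 (mod 4)`. -/
noncomputable def ecomp {k : ℕ} (σ : Equiv.Perm (Fin (2 * k))) : ℕ :=
  Nat.card {C : (Gamma σ).ConnectedComponent // compSize C % 4 = 0}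

/-- `ℓo(σ)`: the number of connected components of `Γ(σ)` whose size is `≡ 2 (mod 4)`. -/
noncomputable def ocomp {k : ℕ} (σ : Equiv.Perm (Fin (2 * k))) : ℕ :=
  Nat.card {C : (Gamma σ).ConnectedComponent // compSize C % 4 = 2}

/-- Membership in the hyperoctahedral subgroup `H_k ≤ S_{2k}`: each pair
`{2i-1, 2i}` is mapped onto some pair `{2j-1, 2j}`. -/
def IsHyper {k : ℕ} (ζ : Equiv.Perm (Fin (2 * k))) : Prop :=
  ∀ i : Fin k, ∃ j : Fin k, ({ζ (lo i), ζ (hi i)} : Finset (Fin (2 * k))) = {lo j, hi j}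

/-- The defining property of the set `M_{2k}` of coset representatives of `S_{2k}/H_k`:
`σ(2i-1) < σ(2i)` for all `i` and `σ(1) < σ(3) < ⋯ < σ(2k-1)`. -/
def MProp {k : ℕ} (σ : Equiv.Perm (Fin (2 * k))) : Prop :=
  (∀ i : Fin k, σ (lo i) < σ (hi i)) ∧ ∀ i j : Fin k, i < j → σ (lo i) < σ (lo j)

open scoped Classical in
/-- The set `M_{2k}` of coset representatives of `S_{2k}/H_k`, as a `Finset`. -/
noncomputable def Mset (k : ℕ) : Finset (Equiv.Perm (Fin (2 * k))) :=
  Finset.univ.filter MProp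

/-- Reduced convolution: `(f ⋆ g)(σ) = ∑_{τ ∈ M_{2k}} f(τ) g(τ⁻¹ σ)`. -/
noncomputable def sconv {k : ℕ} {R : Type*} [CommRing R]
    (f g : Equiv.Perm (Fin (2 * k)) → R) : Equiv.Perm (Fin (2 * k)) → R :=
  fun σ => ∑ τ ∈ Mset k, f τ * g (τ⁻¹ * σ)

open scoped Classical in
/-- The indicator function `1_k` of `H_k`. -/
noncomputable def oneH {k : ℕ} {R : Type*} [CommRing R] : Equiv.Perm (Fin (2 * k)) → R :=
  fun σ => if IsHyper σ then 1 else 0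

open scoped Classical in
/-- The twisted indicator function `1_k^ε` of `H_k`: `σ ↦ ε(σ)` on `H_k`, `0` elsewhere. -/
noncomputable def oneHeps {k : ℕ} {R : Type*} [CommRing R] : Equiv.Perm (Fin (2 * k)) → R :=
  fun σ => if IsHyper σ then sgn R σ else 0

/-- `δ_σ(i,j) = ∏_{s=1}^k δ_{i_{σ(s)}, j_s}`. -/
def deltaP {k : ℕ} {α : Type*} [DecidableEq α] {R : Type*} [CommRing R]
    (σ : Equiv.Perm (Fin k)) (i j : Fin k → α) : R :=
  ∏ s : Fin k, if i (σ s) = j s then 1 else 0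

/-- `Δ_σ(i) = ∏_{s=1}^k δ_{i_{σ(2s-1)}, i_{σ(2s)}}`. -/
def DeltaO {k : ℕ} {α : Type*} [DecidableEq α] {R : Type*} [CommRing R]
    (σ : Equiv.Perm (Fin (2 * k))) (i : Fin (2 * k) → α) : R :=
  ∏ s : Fin k, if i (σ (lo s)) = i (σ (hi s)) then 1 else 0

/-- The standard skew-symmetric matrix `J_n = ((O, I_n), (−I_n, O))`. -/
def Jmat (R : Type*) [CommRing R] (n : ℕ) : Matrix (Fin (2 * n)) (Fin (2 * n)) R :=
  Matrix.of fun p q =>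
    if (p : ℕ) + n = (q : ℕ) then 1 else if (q : ℕ) + n = (p : ℕ) then -1 else 0

/-- `Δ'_σ(i) = ∏_{r=1}^k ⟨i_{σ(2r-1)}, i_{σ(2r)}⟩`, where `⟨p,q⟩` is the `(p,q)` entry
of `J_n`. -/
def DeltaSp {k n : ℕ} (R : Type*) [CommRing R]
    (σ : Equiv.Perm (Fin (2 * k))) (i : Fin (2 * k) → Fin (2 * n)) : R :=
  ∏ s : Fin k, Jmat R n (i (σ (lo s))) (i (σ (hi s)))

/-- The signature matrix `I'_{a,n-a} = diag(I_a, −I_{n-a})`, of size `n`. -/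
def Iab (R : Type*) [CommRing R] (n a : ℕ) : Matrix (Fin n) (Fin n) R :=
  Matrix.of fun p q => if p = q then (if (p : ℕ) < a then 1 else -1) else 0

/-- The signature matrix `I''_{a,n-a} = diag(I_a, −I_{n-a}, I_a, −I_{n-a})`, of size `2n`. -/
def Ippab (R : Type*) [CommRing R] (n a : ℕ) : Matrix (Fin (2 * n)) (Fin (2 * n)) R :=
  Matrix.of fun p q => if p = q then (if (p : ℕ) % n < a then 1 else -1) else 0

/-- The unitary group `U(n)` of `n × n` complex unitary matrices. -/
abbrev UG (n : ℕ) := Matrix.unitaryGroup (Fin n) ℂ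

/-- The real orthogonal group `O(n)`. -/
abbrev OG (n : ℕ) := Matrix.orthogonalGroup (Fin n) ℝ

noncomputable instance (n : ℕ) : MeasurableSpace (UG n) := borel _

noncomputable instance (n : ℕ) : MeasurableSpace (OG n) := borel _

/-- A `2n × 2n` unitary matrix lies in the compact symplectic group `Sp(2n)`
iff `S J Sᵀ = J`. -/
def IsSymplectic {n : ℕ} (S : UG (2 * n)) : Prop :=
  (S : Matrix (Fin (2 * n)) (Fin (2 * n)) ℂ) * Jmat ℂ n
    * (S : Matrix (Fin (2 * n)) (Fin (2 * n)) ℂ)ᵀ = Jmat ℂ n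

/-- The function `T^{D III}_n` on `S_{2k}`:
`σ ↦ ∑_p Δ_σ(p) ∏_{r=1}^k J_{p_{2r-1}, p_{2r}}`. -/
noncomputable def TDIII (n k : ℕ) : Equiv.Perm (Fin (2 * k)) → ℝ :=
  fun σ => ∑ p : Fin (2 * k) → Fin (2 * n),
    DeltaO σ p * ∏ r : Fin k, Jmat ℝ n (p (lo r)) (p (hi r))

/-- The function `T^{C I}_n` on `S_{2k}`:
`σ ↦ ∑_p Δ'_σ(p) ∏_{r=1}^k (J I'_{nn})_{p_{2r-1}, p_{2r}}`. -/
noncomputable def TCI (n k : ℕ) : Equiv.Perm (Fin (2 * k)) → ℂ :=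
  fun σ => ∑ p : Fin (2 * k) → Fin (2 * n),
    DeltaSp ℂ σ p * ∏ r : Fin k, (Jmat ℂ n * Iab ℂ (2 * n) n) (p (lo r)) (p (hi r))

/-! ### The pairing of `Fin (2k)` and sums over tuples -/

/-- The bijection `(s, false) ↦ lo s`, `(s, true) ↦ hi s`. -/
noncomputable def pairEquiv (k : ℕ) : Fin k × Bool ≃ Fin (2 * k) :=
  Equiv.ofBijective (fun x => if x.2 then hi x.1 else lo x.1) (by
    constructor
    · rintro ⟨a, x⟩ ⟨b, y⟩ h
      cases x <;> cases y <;> simp [lo, hi, Fin.ext_iff] at h ⊢ <;> omega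
    · intro j
      refine ⟨(⟨j / 2, by omega⟩, decide (j.val % 2 = 1)), ?_⟩
      by_cases h : j.val % 2 = 1 <;> simp [h, lo, hi, Fin.ext_iff] <;> omega)

@[simp] lemma pairEquiv_false {k : ℕ} (s : Fin k) : pairEquiv k (s, false) = lo s := rfl

@[simp] lemma pairEquiv_true {k : ℕ} (s : Fin k) : pairEquiv k (s, true) = hi s := rfl

@[simp] lemma pairEquiv_symm_lo {k : ℕ} (s : Fin k) : (pairEquiv k).symm (lo s) = (s, false) := by
  rw [Equiv.symm_apply_eq]; simp

@[simp] lemma pairEquiv_symm_hi {k : ℕ} (s : Fin k) : (pairEquiv k).symm (hi s) = (s, true) := by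
  rw [Equiv.symm_apply_eq]; simp

lemma lo_inj {k : ℕ} {a b : Fin k} : lo a = lo b ↔ a = b := by
  simp [lo, Fin.ext_iff]

lemma hi_inj {k : ℕ} {a b : Fin k} : hi a = hi b ↔ a = b := by
  simp [hi, Fin.ext_iff]

lemma lo_ne_hi {k : ℕ} (a b : Fin k) : lo a ≠ hi b := by
  simp [hi, lo, Fin.ext_iff]; omega

lemma exists_lo_or_hi {k : ℕ} (j : Fin (2 * k)) : ∃ s, j = lo s ∨ j = hi s := by
  obtain ⟨⟨s, b⟩, rfl⟩ := (pairEquiv k).surjective j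
  cases b <;> simp <;> exact ⟨s, by simp⟩

lemma prod_lo_hi {k : ℕ} (F : Fin (2 * k) → ℝ) :
    ∏ j, F j = ∏ s : Fin k, F (lo s) * F (hi s) := by
  rw [← (pairEquiv k).prod_comp, Fintype.prod_prod_type]
  refine Finset.prod_congr rfl fun s _ => ?_
  simp [mul_comm]

/-- Distributivity: a sum over `2k`-tuples of a product over the standard pairs. -/
lemma sum_prod_pairs {k : ℕ} {α : Type*} [Fintype α] [DecidableEq α]
    (F : Fin k → α → α → ℝ) :
    ∑ q : Fin (2 * k) → α, ∏ s, F s (q (lo s)) (q (hi s)) = ∏ s, ∑ a, ∑ b, F s a b := by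
  have h : ∀ s, ∑ a, ∑ b, F s a b = ∑ x : α × α, F s x.1 x.2 := fun s => by
    rw [Fintype.sum_prod_type]
  simp_rw [h]
  rw [Finset.prod_univ_sum, Fintype.piFinset_univ]
  let e : (Fin (2 * k) → α) ≃ (Fin k → α × α) :=
    { toFun := fun q s => (q (lo s), q (hi s))
      invFun := fun x j =>
        let y := (pairEquiv k).symm j
        if y.2 then (x y.1).2 else (x y.1).1
      left_inv := by
        intro q
        funext j
        obtain ⟨⟨s, b⟩, rfl⟩ := (pairEquiv k).surjective j
        cases b <;> simp
      right_inv := by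
        intro x
        funext s
        simp }
  exact Fintype.sum_equiv e _ _ fun q => rfl

/-! ### The functions `Δ_σ` -/

lemma DeltaO_eq_ite {k : ℕ} {α : Type*} [DecidableEq α]
    (σ : Equiv.Perm (Fin (2 * k))) (p : Fin (2 * k) → α) :
    (DeltaO σ p : ℝ) = if ∀ s, p (σ (lo s)) = p (σ (hi s)) then 1 else 0 := by
  unfold DeltaO
  rw [Finset.prod_ite_zero]
  simp

lemma DeltaO_comp {k : ℕ} {α : Type*} [DecidableEq α]
    (σ τ : Equiv.Perm (Fin (2 * k))) (p : Fin (2 * k) → α) :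
    (DeltaO (σ * τ) p : ℝ) = DeltaO τ (p ∘ σ) := rfl

lemma IsHyper.eq_or {k : ℕ} {ζ : Equiv.Perm (Fin (2 * k))} (h : IsHyper ζ) (i : Fin k) :
    ∃ j, (ζ (lo i) = lo j ∧ ζ (hi i) = hi j) ∨ (ζ (lo i) = hi j ∧ ζ (hi i) = lo j) := by
  obtain ⟨j, hj⟩ := h i
  refine ⟨j, ?_⟩
  have hne : ζ (lo i) ≠ ζ (hi i) := fun h => lo_ne_hi _ _ (ζ.injective h)
  have h1 : ζ (lo i) ∈ ({lo j, hi j} : Finset _) := by rw [← hj]; simp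
  have h2 : ζ (hi i) ∈ ({lo j, hi j} : Finset _) := by rw [← hj]; simp
  simp only [Finset.mem_insert, Finset.mem_singleton] at h1 h2
  rcases h1 with h1 | h1 <;> rcases h2 with h2 | h2 <;> simp_all

lemma isHyper_of {k : ℕ} {ζ : Equiv.Perm (Fin (2 * k))}
    (h : ∀ i, ∃ j, (ζ (lo i) = lo j ∧ ζ (hi i) = hi j) ∨ (ζ (lo i) = hi j ∧ ζ (hi i) = lo j)) :
    IsHyper ζ := by
  intro i
  obtain ⟨j, ⟨h1, h2⟩ | ⟨h1, h2⟩⟩ := h i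
  · exact ⟨j, by rw [h1, h2]⟩
  · exact ⟨j, by rw [h1, h2, Finset.pair_comm]⟩

lemma isHyper_one {k : ℕ} : IsHyper (1 : Equiv.Perm (Fin (2 * k))) :=
  isHyper_of fun i => ⟨i, Or.inl ⟨rfl, rfl⟩⟩

lemma IsHyper.mul {k : ℕ} {ζ ξ : Equiv.Perm (Fin (2 * k))} (h : IsHyper ζ) (h' : IsHyper ξ) :
    IsHyper (ζ * ξ) := by
  refine isHyper_of fun i => ?_
  obtain ⟨j, hj⟩ := h'.eq_or i
  obtain ⟨l, hl⟩ := h.eq_or j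
  refine ⟨l, ?_⟩
  simp only [Equiv.Perm.mul_apply]
  grind

/-- Let `q` be constant on each standard pair and separate distinct pairs. Then `ζ ∈ H_k` iff
`q` is also constant on each pair `{ζ (lo s), ζ (hi s)}`. -/
lemma isHyper_iff_DeltaO {k : ℕ} {α : Type*} [DecidableEq α] {ζ : Equiv.Perm (Fin (2 * k))}
    (q : Fin (2 * k) → α) (hq : ∀ s, q (lo s) = q (hi s))
    (hinj : Function.Injective fun s => q (lo s)) :
    IsHyper ζ ↔ ∀ s, q (ζ (lo s)) = q (ζ (hi s)) := by
  constructor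
  · intro h s
    obtain ⟨j, ⟨h1, h2⟩ | ⟨h1, h2⟩⟩ := h.eq_or s <;> rw [h1, h2, hq]
  · intro h
    refine isHyper_of fun i => ?_
    obtain ⟨a, ha⟩ := exists_lo_or_hi (ζ (lo i))
    obtain ⟨b, hb⟩ := exists_lo_or_hi (ζ (hi i))
    have hne : ζ (lo i) ≠ ζ (hi i) := fun h => lo_ne_hi _ _ (ζ.injective h)
    have hab : a = b := by
      apply hinj
      have := h i
      rcases ha with ha | ha <;> rcases hb with hb | hb <;> rw [ha, hb] at this <;>
        simpa [hq] using this
    subst hab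
    refine ⟨a, ?_⟩
    grind

/-- The index of the standard pair containing a point. -/
noncomputable def pairIdx {k : ℕ} (j : Fin (2 * k)) : Fin k := ((pairEquiv k).symm j).1

@[simp] lemma pairIdx_lo {k : ℕ} (s : Fin k) : pairIdx (lo s) = s := by
  simp [pairIdx]

@[simp] lemma pairIdx_hi {k : ℕ} (s : Fin k) : pairIdx (hi s) = s := by
  simp [pairIdx]

lemma IsHyper.inv {k : ℕ} {ζ : Equiv.Perm (Fin (2 * k))} (h : IsHyper ζ) : IsHyper ζ⁻¹ := by
  have hf : IsOfFinOrder ζ := isOfFinOrder_of_finite ζ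
  obtain ⟨m, hm⟩ : ∃ m : ℕ, ζ ^ m = ζ⁻¹ := by
    obtain ⟨m, hm, h1⟩ := hf.exists_pow_eq_one
    refine ⟨m - 1, ?_⟩
    rw [eq_inv_iff_mul_eq_one, ← pow_succ, Nat.sub_add_cancel hm, h1]
  rw [← hm]
  clear hm
  induction m with
  | zero => simpa using isHyper_one
  | succ m ih => rw [pow_succ]; exact ih.mul h

lemma DeltaO_mul_hyper {k : ℕ} {α : Type*} [DecidableEq α]
    (σ ζ : Equiv.Perm (Fin (2 * k))) (hζ : IsHyper ζ) (p : Fin (2 * k) → α) :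
    (DeltaO (σ * ζ) p : ℝ) = DeltaO σ p := by
  have key : ∀ (τ ξ : Equiv.Perm (Fin (2 * k))), IsHyper ξ →
      (∀ s, p (τ (lo s)) = p (τ (hi s))) → ∀ s, p ((τ * ξ) (lo s)) = p ((τ * ξ) (hi s)) := by
    intro τ ξ hξ h s
    obtain ⟨j, ⟨h1, h2⟩ | ⟨h1, h2⟩⟩ := hξ.eq_or s <;> simp [h1, h2, h]
  rw [DeltaO_eq_ite, DeltaO_eq_ite]
  congr 1
  refine propext ⟨fun h => ?_, key σ ζ hζ⟩
  simpa using key (σ * ζ) ζ⁻¹ hζ.inv h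

/-- `Σ_p Δ_1(p) Δ_σ(p) = N^{c(σ)}`: both sides count the colourings of `Γ(σ)` that are
constant on connected components. -/
lemma sum_DeltaO_one_mul {k N : ℕ} (σ : Equiv.Perm (Fin (2 * k))) :
    ∑ p : Fin (2 * k) → Fin N, (DeltaO 1 p * DeltaO σ p : ℝ) = (N : ℝ) ^ ccount σ := by
  classical
  have hadj : ∀ p : Fin (2 * k) → Fin N,
      ((∀ s, p (lo s) = p (hi s)) ∧ ∀ s, p (σ (lo s)) = p (σ (hi s))) ↔
        ∀ u v, (Gamma σ).Adj u v → p u = p v := by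
    intro p
    constructor
    · rintro ⟨h1, h2⟩ u v huv
      simp only [Gamma, SimpleGraph.fromRel_adj] at huv
      obtain ⟨-, (⟨r, rfl, rfl⟩ | ⟨r, rfl, rfl⟩) | (⟨r, rfl, rfl⟩ | ⟨r, rfl, rfl⟩)⟩ := huv <;>
        simp [h1, h2]
    · intro h
      refine ⟨fun s => h _ _ ?_, fun s => h _ _ ?_⟩ <;>
        simp only [Gamma, SimpleGraph.fromRel_adj]
      · exact ⟨lo_ne_hi _ _, Or.inl (Or.inl ⟨s, rfl, rfl⟩)⟩
      · exact ⟨fun h => lo_ne_hi _ _ (σ.injective h), Or.inl (Or.inr ⟨s, rfl, rfl⟩)⟩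
  have hterm : ∀ p : Fin (2 * k) → Fin N, (DeltaO 1 p * DeltaO σ p : ℝ) =
      if ∀ u v, (Gamma σ).Adj u v → p u = p v then 1 else 0 := by
    intro p
    rw [DeltaO_eq_ite, DeltaO_eq_ite, ← if_congr (hadj p) rfl rfl]
    by_cases h1 : ∀ s, p (lo s) = p (hi s) <;>
      by_cases h2 : ∀ s, p (σ (lo s)) = p (σ (hi s)) <;> simp [h1, h2]
  simp_rw [hterm]
  rw [Finset.sum_boole]
  let e : {p : Fin (2 * k) → Fin N // ∀ u v, (Gamma σ).Adj u v → p u = p v} ≃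
      ((Gamma σ).ConnectedComponent → Fin N) :=
    { toFun := fun p => SimpleGraph.ConnectedComponent.lift p.1 (by
        intro u v w _
        induction w with
        | nil => rfl
        | cons h _ ih => exact (p.2 _ _ h).trans (ih (by simp_all)))
      invFun := fun c => ⟨fun u => c ((Gamma σ).connectedComponentMk u), fun u v h => by
        exact congrArg c (SimpleGraph.ConnectedComponent.eq.2 h.reachable)⟩
      left_inv := fun p => by ext; simp
      right_inv := fun c => by
        funext x
        induction x using SimpleGraph.ConnectedComponent.ind
        simp }
  have hc := Nat.card_congr e
  rw [Nat.card_fun, Nat.card_eq_fintype_card, Fintype.card_subtype] at hc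
  rw [hc]
  simp [ccount]

lemma sum_DeltaO_mul {k N : ℕ} (σ τ : Equiv.Perm (Fin (2 * k))) :
    ∑ p : Fin (2 * k) → Fin N, (DeltaO σ p * DeltaO τ p : ℝ) = (N : ℝ) ^ ccount (σ⁻¹ * τ) := by
  rw [← sum_DeltaO_one_mul, ← (Equiv.arrowCongr σ (Equiv.refl (Fin N))).sum_comp]
  refine Finset.sum_congr rfl fun p _ => ?_
  have h : ((Equiv.arrowCongr σ (Equiv.refl (Fin N))) p) ∘ σ = p := by
    funext j; simp
  nth_rewrite 1 [← mul_one σ]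
  rw [DeltaO_comp, h, ← mul_inv_cancel_left σ τ, DeltaO_comp, h]
  simp

lemma pow_ccount_mul_hyper {k N : ℕ} (σ ζ : Equiv.Perm (Fin (2 * k))) (hζ : IsHyper ζ) :
    (N : ℝ) ^ ccount (σ * ζ) = (N : ℝ) ^ ccount σ := by
  rw [← sum_DeltaO_one_mul, ← sum_DeltaO_one_mul]
  simp_rw [DeltaO_mul_hyper σ ζ hζ]

/-! ### `M_{2k}` is a transversal of `S_{2k} / H_k` -/

lemma mem_Mset {k : ℕ} {σ : Equiv.Perm (Fin (2 * k))} : σ ∈ Mset k ↔ MProp σ := by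
  simp [Mset]

lemma exists_mem_Mset {k : ℕ} (σ : Equiv.Perm (Fin (2 * k))) :
    ∃ ζ, IsHyper ζ ∧ σ * ζ ∈ Mset k := by
  -- Order the pairs by their minima, then swap inside the pairs listed in the wrong order.
  let f : Fin k → Fin (2 * k) := fun i => min (σ (lo i)) (σ (hi i))
  have hf : Function.Injective f := by
    intro a b hab
    by_contra hne
    have h1 : σ (lo a) ≠ σ (lo b) := fun h => hne (lo_inj.1 (σ.injective h))
    have h2 : σ (hi a) ≠ σ (hi b) := fun h => hne (hi_inj.1 (σ.injective h))
    have h3 : σ (lo a) ≠ σ (hi b) := fun h => lo_ne_hi _ _ (σ.injective h)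
    have h4 : σ (lo b) ≠ σ (hi a) := fun h => lo_ne_hi _ _ (σ.injective h)
    simp only [f, min_def] at hab
    split_ifs at hab <;> simp_all
  let π := Tuple.sort f
  have hπ : StrictMono (f ∘ π) :=
    (Tuple.monotone_sort f).strictMono_of_injective (hf.comp π.injective)
  let ξ : Equiv.Perm (Fin k × Bool) := Equiv.prodShear π fun i =>
    if σ (hi (π i)) < σ (lo (π i)) then Equiv.boolNot else Equiv.refl _
  let ζ : Equiv.Perm (Fin (2 * k)) := ((pairEquiv k).symm.trans ξ).trans (pairEquiv k)
  have hlo : ∀ i, ζ (lo i) = if σ (hi (π i)) < σ (lo (π i)) then hi (π i) else lo (π i) := by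
    intro i
    by_cases h : σ (hi (π i)) < σ (lo (π i)) <;> simp [ζ, ξ, Equiv.prodShear, h]
  have hhi : ∀ i, ζ (hi i) = if σ (hi (π i)) < σ (lo (π i)) then lo (π i) else hi (π i) := by
    intro i
    by_cases h : σ (hi (π i)) < σ (lo (π i)) <;> simp [ζ, ξ, Equiv.prodShear, h]
  have hmin : ∀ i, σ (ζ (lo i)) = f (π i) := by
    intro i
    rw [hlo]
    split_ifs with h
    · exact (min_eq_right h.le).symm
    · exact (min_eq_left (not_lt.1 h)).symm
  refine ⟨ζ, isHyper_of fun i => ⟨π i, ?_⟩, mem_Mset.2 ⟨fun i => ?_, fun i j hij => ?_⟩⟩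
  · rw [hlo, hhi]
    split_ifs <;> simp
  · have hne : σ (ζ (lo i)) ≠ σ (ζ (hi i)) := fun h =>
      lo_ne_hi _ _ (ζ.injective (σ.injective h))
    refine lt_of_le_of_ne ?_ hne
    rw [Equiv.Perm.mul_apply, Equiv.Perm.mul_apply, hlo, hhi]
    split_ifs with h
    · exact h.le
    · exact not_lt.1 h
  · simp only [Equiv.Perm.mul_apply, hmin]
    exact hπ hij

lemma Mset_unique {k : ℕ} {σ ζ : Equiv.Perm (Fin (2 * k))} (hσ : σ ∈ Mset k) (hζ : IsHyper ζ)
    (hσζ : σ * ζ ∈ Mset k) : ζ = 1 := by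
  rw [mem_Mset] at hσ hσζ
  have hpair : ∀ i, ∃ j, ζ (lo i) = lo j ∧ ζ (hi i) = hi j := by
    intro i
    obtain ⟨j, h | ⟨h1, h2⟩⟩ := hζ.eq_or i
    · exact ⟨j, h⟩
    · have := hσζ.1 i
      simp only [Equiv.Perm.mul_apply, h1, h2] at this
      exact absurd this (hσ.1 j).asymm
  choose π hπ using hpair
  have hσmono : StrictMono fun i => σ (lo i) := fun i j hij => hσ.2 i j hij
  have hmono : StrictMono π := by
    intro i j hij
    have := hσζ.2 i j hij
    simp only [Equiv.Perm.mul_apply, (hπ _).1] at this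
    exact hσmono.lt_iff_lt.1 this
  have hid : π = id := by
    have h1 : ∀ i, i ≤ π i := fun i => hmono.le_apply
    have h2 : ∀ i, π i ≤ i := fun i => hmono.apply_le
    funext i
    exact le_antisymm (h2 i) (h1 i)
  ext1 j
  obtain ⟨s, rfl | rfl⟩ := exists_lo_or_hi j
  · rw [(hπ s).1, hid]; rfl
  · rw [(hπ s).2, hid]; rfl

/-- Every coset `ρ H_k` meets `M_{2k}` exactly once. -/
lemma existsUnique_Mset {k : ℕ} (ρ : Equiv.Perm (Fin (2 * k))) :
    ∃ τ ∈ Mset k, IsHyper (ρ⁻¹ * τ) ∧ ∀ τ' ∈ Mset k, IsHyper (ρ⁻¹ * τ') → τ' = τ := by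
  obtain ⟨ζ, hζ, hM⟩ := exists_mem_Mset ρ
  refine ⟨ρ * ζ, hM, by simpa using hζ, fun τ' hτ' h => ?_⟩
  have h2 : IsHyper ((ρ * ζ)⁻¹ * τ') := by
    have := hζ.inv.mul h
    rwa [_root_.mul_inv_rev, mul_assoc]
  have := Mset_unique hM h2 (by rwa [mul_inv_cancel_left])
  rwa [inv_mul_eq_one, eq_comm] at this

open scoped Classical in
/-- The sum of a right `H_k`-invariant function over `M_{2k}`, scaled by `|H_k|`,
is its sum over `S_{2k}`. -/
lemma sum_univ_eq {k : ℕ} (F : Equiv.Perm (Fin (2 * k)) → ℝ)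
    (hF : ∀ σ ζ, IsHyper ζ → F (σ * ζ) = F σ) :
    ∑ σ, F σ = (Finset.univ.filter (IsHyper (k := k))).card * ∑ σ ∈ Mset k, F σ := by
  have h : ∑ σ, F σ = ∑ x ∈ Mset k ×ˢ Finset.univ.filter (IsHyper (k := k)), F (x.1 * x.2) := by
    symm
    refine Finset.sum_bij (fun x _ => x.1 * x.2) (fun _ _ => Finset.mem_univ _) ?_ ?_
      (fun _ _ => rfl)
    · rintro ⟨a, ζ⟩ ha ⟨b, ξ⟩ hb hab
      simp only [Finset.mem_product, Finset.mem_filter, Finset.mem_univ, true_and] at ha hb hab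
      have h1 : b = a * (ζ * ξ⁻¹) := by rw [← mul_assoc, hab]; simp
      have h2 := Mset_unique ha.1 (ha.2.mul hb.2.inv) (h1 ▸ hb.1)
      rw [h2, mul_one] at h1
      rw [mul_inv_eq_one] at h2
      rw [h1, h2]
    · intro σ _
      obtain ⟨ζ, hζ, hM⟩ := exists_mem_Mset σ
      exact ⟨(σ * ζ, ζ⁻¹), by simp [hM, hζ.inv], by simp⟩
  rw [h, Finset.sum_product, Finset.mul_sum]
  refine Finset.sum_congr rfl fun σ _ => ?_
  rw [Finset.sum_congr rfl fun ζ hζ => hF σ ζ (Finset.mem_filter.1 hζ).2]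
  simp

lemma sum_Mset_translate {k : ℕ} (F : Equiv.Perm (Fin (2 * k)) → ℝ)
    (hF : ∀ σ ζ, IsHyper ζ → F (σ * ζ) = F σ) (ρ : Equiv.Perm (Fin (2 * k))) :
    ∑ σ ∈ Mset k, F (ρ * σ) = ∑ σ ∈ Mset k, F σ := by
  classical
  have h1 := sum_univ_eq F hF
  have h2 := sum_univ_eq (fun σ => F (ρ * σ)) fun σ ζ hζ => by rw [← mul_assoc, hF _ _ hζ]
  have h3 : ∑ σ, F (ρ * σ) = ∑ σ, F σ := Equiv.sum_comp (Equiv.mulLeft ρ) F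
  have h0 : ((Finset.univ.filter (IsHyper (k := k))).card : ℝ) ≠ 0 := by
    rw [Nat.cast_ne_zero]
    exact Finset.card_ne_zero_of_mem (Finset.mem_filter.2 ⟨Finset.mem_univ _, isHyper_one⟩)
  rw [h3, h1] at h2
  exact (mul_left_cancel₀ h0 h2).symm

/-! ### Orthogonally invariant tensors -/

/-- `f`, viewed as a tensor in `(ℝ^N)^{⊗ 2k}`, is fixed by `g^{⊗ 2k}` for every `g ∈ O(N)`. -/
def OInvariant {k N : ℕ} (f : (Fin (2 * k) → Fin N) → ℝ) : Prop :=
  ∀ g : Matrix (Fin N) (Fin N) ℝ, g * gᵀ = 1 →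
    ∀ p, ∑ q, (∏ j, g (p j) (q j)) * f q = f p

lemma OInvariant.sub {k N : ℕ} {f h : (Fin (2 * k) → Fin N) → ℝ}
    (hf : OInvariant f) (hh : OInvariant h) : OInvariant fun p => f p - h p := by
  intro g hg p
  simp only [mul_sub, Finset.sum_sub_distrib, hf g hg, hh g hg]

lemma OInvariant.sum {k N : ℕ} {ι : Type*} (S : Finset ι)
    {F : ι → (Fin (2 * k) → Fin N) → ℝ} (c : ι → ℝ)
    (hf : ∀ i, OInvariant (F i)) : OInvariant fun p => ∑ i ∈ S, F i p * c i := by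
  intro g hg p
  simp_rw [Finset.mul_sum]
  rw [Finset.sum_comm]
  refine Finset.sum_congr rfl fun i _ => ?_
  rw [← hf i g hg p, Finset.sum_mul]
  exact Finset.sum_congr rfl fun q _ => by ring

lemma sum_prod_mul_DeltaO {k N : ℕ} (g : Matrix (Fin N) (Fin N) ℝ) (hg : g * gᵀ = 1)
    (σ : Equiv.Perm (Fin (2 * k))) (p : Fin (2 * k) → Fin N) :
    ∑ q : Fin (2 * k) → Fin N, (∏ j, g (p j) (q j)) * DeltaO σ q = DeltaO σ p := by
  rw [← (Equiv.arrowCongr σ (Equiv.refl (Fin N))).sum_comp]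
  have hterm : ∀ q : Fin (2 * k) → Fin N,
      (∏ j, g (p j) ((Equiv.arrowCongr σ (Equiv.refl (Fin N))) q j)) *
        (DeltaO σ ((Equiv.arrowCongr σ (Equiv.refl (Fin N))) q) : ℝ) =
      ∏ s, (g (p (σ (lo s))) (q (lo s)) * g (p (σ (hi s))) (q (hi s)) *
        if q (lo s) = q (hi s) then 1 else 0) := by
    intro q
    rw [← Equiv.prod_comp σ, prod_lo_hi, DeltaO, ← Finset.prod_mul_distrib]
    simp
  simp_rw [hterm]
  rw [sum_prod_pairs fun s a b => g (p (σ (lo s))) a * g (p (σ (hi s))) b *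
    if a = b then 1 else 0, DeltaO]
  refine Finset.prod_congr rfl fun s _ => ?_
  have := congrFun (congrFun hg (p (σ (lo s)))) (p (σ (hi s)))
  simpa [Matrix.mul_apply, Matrix.one_apply] using this

lemma OInvariant_DeltaO {k N : ℕ} (σ : Equiv.Perm (Fin (2 * k))) :
    OInvariant (N := N) (DeltaO σ) := fun g hg p => sum_prod_mul_DeltaO g hg σ p

lemma OInvariant.perm {k N : ℕ} {f : (Fin (2 * k) → Fin N) → ℝ} (hf : OInvariant f)
    (π : Equiv.Perm (Fin N)) (p : Fin (2 * k) → Fin N) : f (π ∘ p) = f p := by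
  have hg : (Matrix.of fun a b => if π a = b then (1 : ℝ) else 0) *
      (Matrix.of fun a b => if π a = b then (1 : ℝ) else 0)ᵀ = 1 := by
    ext a b
    simp [Matrix.mul_apply, Matrix.one_apply, eq_comm]
  rw [← hf _ hg p, Finset.sum_eq_single (π ∘ p)]
  · simp
  · intro q _ hq
    obtain ⟨j, hj⟩ := Function.ne_iff.1 hq
    rw [Finset.prod_eq_zero (Finset.mem_univ j), zero_mul]
    simpa using fun h => hj h.symm
  · simp

/-- A value attained exactly once is killed by the sign change of its coordinate. -/
lemma OInvariant.eq_zero_of_card_eq_one {k N : ℕ} {f : (Fin (2 * k) → Fin N) → ℝ}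
    (hf : OInvariant f)
    (p : Fin (2 * k) → Fin N) (a : Fin N)
    (ha : (Finset.univ.filter fun j => p j = a).card = 1) : f p = 0 := by
  let d : Fin N → ℝ := fun x => if x = a then -1 else 1
  have hd : ∀ x, d x * d x = 1 := by intro x; simp only [d]; split_ifs <;> norm_num
  have hg : Matrix.diagonal d * (Matrix.diagonal d)ᵀ = 1 := by
    rw [Matrix.diagonal_transpose, Matrix.diagonal_mul_diagonal]
    simp [hd]
  have h := hf _ hg p
  rw [Finset.sum_eq_single p] at h
  · have h2 : ∏ j, Matrix.diagonal d (p j) (p j) = -1 := by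
      simp [d, Finset.prod_ite, ha]
    rw [h2] at h
    linarith
  · intro q _ hq
    obtain ⟨j, hj⟩ := Function.ne_iff.1 hq
    rw [Finset.prod_eq_zero (Finset.mem_univ j), zero_mul]
    exact Matrix.diagonal_apply_ne _ hj.symm
  · simp

/-- The reflection of `ℝ^N` orthogonal to `e_a - 2 e_b`; in the plane of `e_a, e_b` it is
`((3/5, 4/5), (4/5, -3/5))`. -/
noncomputable def planeRefl {N : ℕ} (a b : Fin N) : Matrix (Fin N) (Fin N) ℝ :=
  1 - (2 / 5 : ℝ) • Matrix.vecMulVec (Pi.single a 1 - 2 • Pi.single b 1)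
    (Pi.single a 1 - 2 • Pi.single b 1)

lemma planeRefl_mul_transpose {N : ℕ} {a b : Fin N} (hab : a ≠ b) :
    planeRefl a b * (planeRefl a b)ᵀ = 1 := by
  set u : Fin N → ℝ := Pi.single a 1 - 2 • Pi.single b 1 with hu
  have huu : u ⬝ᵥ u = 5 := by
    rw [hu, sub_dotProduct, dotProduct_sub, dotProduct_sub]
    simp only [smul_dotProduct, dotProduct_smul, single_dotProduct, Pi.single_apply, hab,
      hab.symm]
    norm_num
  have h2 : Matrix.vecMulVec u u * Matrix.vecMulVec u u = (5 : ℝ) • Matrix.vecMulVec u u := by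
    rw [Matrix.vecMulVec_mul_vecMulVec, huu]
    ext i j
    simp [Matrix.vecMulVec_apply]
    ring
  have h3 : planeRefl a b = 1 - (2 / 5 : ℝ) • Matrix.vecMulVec u u := rfl
  rw [h3, Matrix.transpose_sub, Matrix.transpose_smul, Matrix.transpose_vecMulVec,
    Matrix.transpose_one, sub_mul, mul_sub, mul_sub, smul_mul_smul_comm, h2, smul_smul]
  simp only [one_mul, mul_one]
  module

lemma planeRefl_apply {N : ℕ} {a b : Fin N} (hab : a ≠ b) (x y : Fin N) (hx : x ≠ b) :
    planeRefl a b x y = if x = a then (if y = a then 3 / 5 else if y = b then 4 / 5 else 0)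
      else if x = y then 1 else 0 := by
  simp only [planeRefl, Matrix.sub_apply, Matrix.smul_apply, Matrix.vecMulVec_apply, Pi.sub_apply,
    Pi.smul_apply, Matrix.one_apply, Pi.single_apply, smul_eq_mul]
  grind

/-- An invariant tensor that vanishes at every tuple whose values are all attained exactly
twice is zero. The induction is on the number of unused values: if `a` is attained `m ≥ 3` times
and `b` not at all, `planeRefl a b` gives `f p = (3/5)^m f p + (4/5)^m f p' + ⋯`, where `p'` is `p`
with `a` renamed to `b` and the omitted terms are values of `f` at tuples
attaining more values than `p`. -/
lemma OInvariant.eq_zero {k N : ℕ} (hkN : k < N) {f : (Fin (2 * k) → Fin N) → ℝ}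
    (hf : OInvariant f)
    (h2 : ∀ p, (∀ j, (Finset.univ.filter fun j' => p j' = p j).card = 2) → f p = 0)
    (p : Fin (2 * k) → Fin N) : f p = 0 := by
  classical
  induction hd : N - (Finset.univ.image p).card using Nat.strong_induction_on generalizing p with
  | _ d ih =>
  by_cases h1 : ∃ j, (Finset.univ.filter fun j' => p j' = p j).card = 1
  · obtain ⟨j, hj⟩ := h1
    exact hf.eq_zero_of_card_eq_one p _ hj
  have hge : ∀ j, 2 ≤ (Finset.univ.filter fun j' => p j' = p j).card := by
    intro j
    have h0 : (Finset.univ.filter fun j' => p j' = p j).card ≠ 0 :=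
      Finset.card_ne_zero_of_mem (a := j) (by simp)
    have := not_exists.1 h1 j
    omega
  by_cases h3 : ∃ j, 3 ≤ (Finset.univ.filter fun j' => p j' = p j).card
  swap
  · refine h2 p fun j => le_antisymm ?_ (hge j)
    have := not_exists.1 h3 j
    omega
  obtain ⟨j₀, hj₀⟩ := h3
  set a := p j₀ with ha
  set A := Finset.univ.filter fun j' => p j' = a with hA
  have hcard : (Finset.univ.image p).card * 2 ≤ 2 * k := by
    by_contra hlt
    obtain ⟨y, hy, hlt⟩ := Finset.exists_card_fiber_lt_of_card_lt_mul (f := p)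
      (s := Finset.univ) (t := Finset.univ.image p) (n := 2) (by
        rw [Finset.card_univ, Fintype.card_fin]; omega)
    obtain ⟨j, -, rfl⟩ := Finset.mem_image.1 hy
    exact absurd hlt (not_lt.2 (hge j))
  obtain ⟨b, hb⟩ : ∃ b, b ∉ Finset.univ.image p := by
    by_contra hcon
    push Not at hcon
    have : Finset.univ.image p = Finset.univ := Finset.eq_univ_iff_forall.2 hcon
    rw [this, Finset.card_univ, Fintype.card_fin] at hcard
    omega
  have hpb : ∀ j, p j ≠ b := by simpa using hb
  have hab : a ≠ b := hpb j₀
  set p' : Fin (2 * k) → Fin N := Equiv.swap a b ∘ p with hp'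
  have hp'f : f p' = f p := hf.perm _ p
  have hp'a : ∀ j, p' j = if p j = a then b else p j := by
    intro j
    simp only [hp', Function.comp_apply]
    split_ifs with h
    · simp [h]
    · exact Equiv.swap_apply_of_ne_of_ne h (hpb j)
  have hne : p ≠ p' := by
    intro h
    have := hp'a j₀
    rw [← h] at this
    simp [← ha, hab] at this
  have hsum := hf _ (planeRefl_mul_transpose hab) p
  rw [Finset.sum_eq_add p p' hne ?_ (by simp) (by simp)] at hsum
  · have e1 : ∏ j, planeRefl a b (p j) (p j) = (3 / 5) ^ A.card := by
      simp_rw [planeRefl_apply hab _ _ (hpb _)]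
      rw [Finset.prod_congr rfl (g := fun j => if p j = a then (3 / 5 : ℝ) else 1)
        (fun j _ => by split_ifs <;> simp_all)]
      rw [Finset.prod_ite, Finset.prod_const, Finset.prod_const_one, mul_one]
    have e2 : ∏ j, planeRefl a b (p j) (p' j) = (4 / 5) ^ A.card := by
      simp_rw [planeRefl_apply hab _ _ (hpb _), hp'a]
      rw [Finset.prod_congr rfl (g := fun j => if p j = a then (4 / 5 : ℝ) else 1)
        (fun j _ => by split_ifs <;> simp_all)]
      rw [Finset.prod_ite, Finset.prod_const, Finset.prod_const_one, mul_one]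
    rw [e1, e2, hp'f] at hsum
    have b1 : (3 / 5 : ℝ) ^ A.card ≤ (3 / 5) ^ 3 :=
      pow_le_pow_of_le_one (by norm_num) (by norm_num) hj₀
    have b2 : (4 / 5 : ℝ) ^ A.card ≤ (4 / 5) ^ 3 :=
      pow_le_pow_of_le_one (by norm_num) (by norm_num) hj₀
    have h0 : (1 - (3 / 5 : ℝ) ^ A.card - (4 / 5) ^ A.card) * f p = 0 := by linarith
    rcases mul_eq_zero.1 h0 with h | h
    · norm_num at b1 b2; linarith
    · exact h
  · -- Every other contributing tuple takes both values `a` and `b` on `A`.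
    rintro q - ⟨hq1, hq2⟩
    by_cases hz : ∃ j, planeRefl a b (p j) (q j) = 0
    · obtain ⟨j, hj⟩ := hz
      rw [Finset.prod_eq_zero (Finset.mem_univ j) hj, zero_mul]
    push Not at hz
    have hqA : ∀ j, p j = a → q j = a ∨ q j = b := by
      intro j hj
      have := hz j
      rw [planeRefl_apply hab _ _ (hpb j), if_pos hj] at this
      grind
    have hqn : ∀ j, p j ≠ a → q j = p j := by
      intro j hj
      have := hz j
      rw [planeRefl_apply hab _ _ (hpb j), if_neg hj] at this
      grind
    have hexb : ∃ j, q j = b := by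
      obtain ⟨j, hj⟩ := Function.ne_iff.1 hq1
      refine ⟨j, ?_⟩
      by_cases h : p j = a
      · rcases hqA j h with h' | h'
        · exact absurd (h'.trans h.symm) hj
        · exact h'
      · exact absurd (hqn j h) hj
    have hexa : ∃ j, q j = a := by
      obtain ⟨j, hj⟩ := Function.ne_iff.1 hq2
      rw [hp'a] at hj
      refine ⟨j, ?_⟩
      by_cases h : p j = a
      · rw [if_pos h] at hj
        exact (hqA j h).resolve_right hj
      · rw [if_neg h] at hj
        exact absurd (hqn j h) hj
    have hsub : insert b (Finset.univ.image p) ⊆ Finset.univ.image q := by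
      intro x hx
      rcases Finset.mem_insert.1 hx with rfl | hx
      · simpa using hexb
      · obtain ⟨j, -, rfl⟩ := Finset.mem_image.1 hx
        by_cases h : p j = a
        · rw [h]; simpa using hexa
        · exact Finset.mem_image.2 ⟨j, Finset.mem_univ _, hqn j h⟩
    have hlt := Finset.card_le_card hsub
    rw [Finset.card_insert_of_notMem hb] at hlt
    have hle := Finset.card_le_univ (Finset.univ.image q)
    rw [Fintype.card_fin] at hle
    rw [ih _ (by omega) q rfl, mul_zero]

/-- A tuple attaining each of its values exactly twice is compatible with some pairing. -/
lemma exists_pairing {k N : ℕ} (p : Fin (2 * k) → Fin N)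
    (hp : ∀ j, (Finset.univ.filter fun j' => p j' = p j).card = 2) :
    ∃ σ : Equiv.Perm (Fin (2 * k)), ∀ s, p (σ (lo s)) = p (σ (hi s)) := by
  classical
  have hcard : (Finset.univ.image p).card = k := by
    have h := Finset.card_eq_sum_card_image p Finset.univ
    rw [Finset.sum_congr rfl (g := fun _ => 2) (by
      intro y hy
      obtain ⟨j, -, rfl⟩ := Finset.mem_image.1 hy
      exact hp j)] at h
    simp at h
    omega
  let e := (Finset.equivFinOfCardEq hcard).symm
  have hex : ∀ s : Fin k, ∃ x y, x ≠ y ∧ p x = e s ∧ p y = e s := by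
    intro s
    obtain ⟨j, -, hj⟩ := Finset.mem_image.1 (e s).2
    obtain ⟨x, y, hxy, h⟩ := Finset.card_eq_two.1 (hp j)
    have hx : x ∈ Finset.univ.filter fun j' => p j' = p j := by rw [h]; simp
    have hy : y ∈ Finset.univ.filter fun j' => p j' = p j := by rw [h]; simp
    exact ⟨x, y, hxy, by simpa [hj] using hx, by simpa [hj] using hy⟩
  choose x y hxy hx hy using hex
  let F : Fin k × Bool → Fin (2 * k) := fun z => if z.2 then y z.1 else x z.1
  have hpF : ∀ z, p (F z) = e z.1 := by
    rintro ⟨s, b⟩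
    cases b <;> simp [F, hx, hy]
  have hF : Function.Injective F := by
    rintro ⟨s, b⟩ ⟨t, c⟩ h
    have hst : s = t := by
      have := congrArg p h
      rw [hpF, hpF] at this
      exact e.injective (Subtype.ext this)
    subst hst
    have h1 := hxy s
    have h2 := (hxy s).symm
    cases b <;> cases c <;> simp_all [F]
  have hbij : Function.Bijective F := by
    rw [Fintype.bijective_iff_injective_and_card]
    exact ⟨hF, by simp [mul_comm]⟩
  refine ⟨(pairEquiv k).symm.trans (Equiv.ofBijective F hbij), fun s => ?_⟩
  simp only [Equiv.trans_apply, pairEquiv_symm_lo, pairEquiv_symm_hi, Equiv.ofBijective_apply, hpF]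

lemma injective_of_pairing {k N : ℕ} (p : Fin (2 * k) → Fin N)
    (hp : ∀ j, (Finset.univ.filter fun j' => p j' = p j).card = 2)
    (σ : Equiv.Perm (Fin (2 * k))) (hσ : ∀ s, p (σ (lo s)) = p (σ (hi s))) :
    Function.Injective fun s => p (σ (lo s)) := by
  intro s t hst
  by_contra hne
  simp only at hst
  have hsub : ({σ (lo s), σ (hi s), σ (lo t)} : Finset (Fin (2 * k))) ⊆
      Finset.univ.filter fun j' => p j' = p (σ (lo s)) := by
    intro x hx
    simp only [Finset.mem_insert, Finset.mem_singleton] at hx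
    rw [Finset.mem_filter_univ]
    rcases hx with rfl | rfl | rfl
    · rfl
    · exact (hσ s).symm
    · exact hst.symm
  have hle := Finset.card_le_card hsub
  rw [hp, Finset.card_eq_three.2 ⟨_, _, _, ?_, ?_, ?_, rfl⟩] at hle
  · omega
  · exact fun h => lo_ne_hi _ _ (σ.injective h)
  · exact fun h => hne (lo_inj.1 (σ.injective h))
  · exact fun h => lo_ne_hi _ _ (σ.injective h).symm

/-- First fundamental theorem for `O(N)` in the range `k < N`: an invariant tensor is a linear
combination of the `Δ_σ`, with coefficients its values at colourings that separate
the pairs of `σ`. -/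
lemma OInvariant.eq_sum {k N : ℕ} (hkN : k < N) {f : (Fin (2 * k) → Fin N) → ℝ}
    (hf : OInvariant f) : ∃ c : Equiv.Perm (Fin (2 * k)) → ℝ,
      ∀ p, f p = ∑ σ ∈ Mset k, DeltaO σ p * c σ := by
  let c : Equiv.Perm (Fin (2 * k)) → ℝ := fun σ =>
    f fun j => Fin.castLE hkN.le (pairIdx (σ⁻¹ j))
  refine ⟨c, fun p => ?_⟩
  have hinv : OInvariant fun p => f p - ∑ σ ∈ Mset k, DeltaO σ p * c σ :=
    hf.sub (OInvariant.sum _ c OInvariant_DeltaO)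
  refine sub_eq_zero.1 (hinv.eq_zero hkN (fun p hp => ?_) p)
  obtain ⟨σ, hσ⟩ := exists_pairing p hp
  obtain ⟨τ, hτM, hτ, -⟩ := existsUnique_Mset σ
  have hτp : ∀ s, p (τ (lo s)) = p (τ (hi s)) := by
    intro s
    obtain ⟨j, hj⟩ := hτ.eq_or s
    simp only [Equiv.Perm.mul_apply, Equiv.Perm.inv_eq_iff_eq] at hj
    rcases hj with ⟨h1, h2⟩ | ⟨h1, h2⟩ <;> rw [h1, h2, hσ]
  have hinj := injective_of_pairing p hp τ hτp
  rw [sub_eq_zero, Finset.sum_eq_single τ]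
  · rw [DeltaO_eq_ite, if_pos hτp, one_mul]
    obtain ⟨π, hπ⟩ := Equiv.Perm.exists_extending_pair (Fin.castLE hkN.le)
      (fun s => p (τ (lo s))) (Fin.castLE_injective _) hinj
    have hcomp : p = π ∘ fun j => Fin.castLE hkN.le (pairIdx (τ⁻¹ j)) := by
      funext j
      obtain ⟨s, hs⟩ := exists_lo_or_hi (τ⁻¹ j)
      have hj : j = τ (lo s) ∨ j = τ (hi s) := by
        simpa only [Equiv.Perm.inv_eq_iff_eq] using hs
      have h2 := hπ s
      rcases hj with rfl | rfl
      · simp [h2]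
      · simp [h2, hτp]
    rw [hcomp, hf.perm]
  · intro ρ hρ hne
    rw [DeltaO_eq_ite, if_neg, zero_mul]
    intro h
    have : IsHyper (τ⁻¹ * ρ) := by
      rw [isHyper_iff_DeltaO (p ∘ τ) hτp hinj]
      simpa using h
    refine hne (inv_mul_eq_one.1 (Mset_unique hτM this (by rwa [mul_inv_cancel_left]))).symm
  · exact fun h => absurd hτM h

lemma OInvariant.eq_zero_of_orthogonal {k N : ℕ} (hkN : k < N)
    {f : (Fin (2 * k) → Fin N) → ℝ} (hf : OInvariant f)
    (h : ∀ ρ, ∑ p, DeltaO ρ p * f p = 0) (p : Fin (2 * k) → Fin N) : f p = 0 := by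
  obtain ⟨c, hc⟩ := hf.eq_sum hkN
  have hsq : ∑ p, f p * f p = 0 := by
    calc ∑ p, f p * f p = ∑ p, ∑ σ ∈ Mset k, c σ * (DeltaO σ p * f p) := by
          refine Finset.sum_congr rfl fun p _ => ?_
          conv_lhs => rw [hc p, Finset.sum_mul, ← hc p]
          exact Finset.sum_congr rfl fun σ _ => by ring
      _ = 0 := by
          rw [Finset.sum_comm]
          simp_rw [← Finset.mul_sum, h, mul_zero, Finset.sum_const_zero]
  have := (Finset.sum_eq_zero_iff_of_nonneg fun p _ => mul_self_nonneg (f p)).1 hsq p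
    (Finset.mem_univ p)
  exact mul_self_eq_zero.1 this

/-! ### Moments of the Haar measure on `O(N)` -/

instance (N : ℕ) : BorelSpace (OG N) := ⟨rfl⟩

lemma integrable_prod_entries {N : ℕ} (μ : Measure (OG N)) [IsProbabilityMeasure μ]
    {ι : Type*} [Fintype ι] (p i : ι → Fin N) :
    Integrable (fun R : OG N => ∏ j, (R : Matrix (Fin N) (Fin N) ℝ) (p j) (i j)) μ := by
  have hcont : Continuous fun R : OG N =>
      ∏ j, (R : Matrix (Fin N) (Fin N) ℝ) (p j) (i j) :=
    continuous_finsetProd _ fun j _ => continuous_subtype_val.matrix_elem _ _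
  refine Integrable.of_bound (C := 1) hcont.aestronglyMeasurable (ae_of_all _ fun R => ?_)
  rw [norm_prod]
  exact Finset.prod_le_one (fun _ _ => norm_nonneg _)
    fun j _ => entry_norm_bound_of_unitary R.2 _ _

lemma integral_left_mul {N : ℕ} (μ : Measure (OG N))
    (hμ : ∀ g : OG N, μ.map (fun x => g * x) = μ) (F : OG N → ℝ) (hF : Continuous F)
    (g : OG N) : ∫ R, F (g * R) ∂μ = ∫ R, F R ∂μ := by
  conv_rhs => rw [← hμ g]
  rw [integral_map (continuous_const_mul g).measurable.aemeasurable
    hF.aestronglyMeasurable]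

lemma OInvariant_moment {k N : ℕ} (μ : Measure (OG N)) [IsProbabilityMeasure μ]
    (hμ : ∀ g : OG N, μ.map (fun x => g * x) = μ) (i : Fin (2 * k) → Fin N) :
    OInvariant fun p =>
      ∫ R : OG N, ∏ j, (R : Matrix (Fin N) (Fin N) ℝ) (p j) (i j) ∂μ := by
  intro g hg p
  have hcont : Continuous fun R : OG N =>
      ∏ j, (R : Matrix (Fin N) (Fin N) ℝ) (p j) (i j) :=
    continuous_finsetProd _ fun j _ => continuous_subtype_val.matrix_elem _ _
  refine Eq.trans ?_
    (integral_left_mul μ hμ _ hcont ⟨g, (Matrix.mem_orthogonalGroup_iff _ _).2 hg⟩)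
  simp_rw [← integral_const_mul]
  rw [← integral_finsetSum _ fun q _ => (integrable_prod_entries μ q i).const_mul _]
  refine integral_congr_ae (ae_of_all _ fun R => ?_)
  simp only [Submonoid.coe_mul, Matrix.mul_apply]
  rw [Finset.prod_univ_sum, Fintype.piFinset_univ]
  simp_rw [Finset.prod_mul_distrib]

/-- Weingarten formula for `O(N)`. The difference of the two sides, as a function of `p`, is an
invariant tensor orthogonal to every `Δ_ρ`. -/
lemma integral_prod_entries {k N : ℕ} (hkN : k < N) (μ : Measure (OG N))
    [IsProbabilityMeasure μ] (hμ : ∀ g : OG N, μ.map (fun x => g * x) = μ)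
    (W : Equiv.Perm (Fin (2 * k)) → ℝ)
    (hbi : ∀ (σ ζ ζ' : Equiv.Perm (Fin (2 * k))), IsHyper ζ → IsHyper ζ' →
      W (ζ * σ * ζ') = W σ)
    (hW : sconv (fun σ => (N : ℝ) ^ ccount σ) W = oneH) (p i : Fin (2 * k) → Fin N) :
    ∫ R : OG N, ∏ j, (R : Matrix (Fin N) (Fin N) ℝ) (p j) (i j) ∂μ =
      ∑ σ ∈ Mset k, DeltaO σ p * ∑ τ ∈ Mset k, W (σ⁻¹ * τ) * DeltaO τ i := by
  have hinv := (OInvariant_moment μ hμ i).sub (OInvariant.sum (N := N) (Mset k)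
    (fun σ => ∑ τ ∈ Mset k, W (σ⁻¹ * τ) * DeltaO τ i) OInvariant_DeltaO)
  refine sub_eq_zero.1 (hinv.eq_zero_of_orthogonal hkN (fun ρ => ?_) p)
  simp only [mul_sub, Finset.sum_sub_distrib]
  have h1 : ∑ p : Fin (2 * k) → Fin N, DeltaO ρ p *
      ∫ R : OG N, ∏ j, (R : Matrix (Fin N) (Fin N) ℝ) (p j) (i j) ∂μ = DeltaO ρ i := by
    simp_rw [← integral_const_mul]
    rw [← integral_finsetSum _ fun q _ => (integrable_prod_entries μ q i).const_mul _]
    have hconst : ∀ R : OG N, ∑ p : Fin (2 * k) → Fin N, DeltaO ρ p *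
        ∏ j, (R : Matrix (Fin N) (Fin N) ℝ) (p j) (i j) = DeltaO ρ i := by
      intro R
      rw [← sum_prod_mul_DeltaO (R : Matrix (Fin N) (Fin N) ℝ)ᵀ (by
        rw [Matrix.transpose_transpose]; exact (Matrix.mem_orthogonalGroup_iff' _ _).1 R.2) ρ i]
      exact Finset.sum_congr rfl fun q _ => mul_comm _ _
    simp_rw [hconst]
    simp
  have hgram : ∀ τ, ∑ σ ∈ Mset k, (N : ℝ) ^ ccount (ρ⁻¹ * σ) * W (σ⁻¹ * τ) =
      oneH (ρ⁻¹ * τ) := by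
    intro τ
    rw [← hW, sconv, ← sum_Mset_translate _ _ ρ]
    · refine Finset.sum_congr rfl fun σ _ => ?_
      rw [inv_mul_cancel_left, _root_.mul_inv_rev, mul_assoc]
    · intro σ ζ hζ
      rw [← mul_assoc, pow_ccount_mul_hyper _ _ hζ, _root_.mul_inv_rev, mul_assoc]
      rw [← hbi (σ⁻¹ * τ) ζ⁻¹ 1 hζ.inv isHyper_one, mul_one]
  have h2 : ∑ p : Fin (2 * k) → Fin N, DeltaO ρ p * ∑ σ ∈ Mset k, DeltaO σ p *
      ∑ τ ∈ Mset k, W (σ⁻¹ * τ) * DeltaO τ i = DeltaO ρ i := by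
    calc _ = ∑ σ ∈ Mset k, (∑ p : Fin (2 * k) → Fin N, DeltaO ρ p * DeltaO σ p) *
          ∑ τ ∈ Mset k, W (σ⁻¹ * τ) * DeltaO τ i := by
          simp_rw [Finset.mul_sum (Mset k) _ (DeltaO ρ _)]
          rw [Finset.sum_comm]
          simp_rw [Finset.sum_mul, mul_assoc]
      _ = ∑ τ ∈ Mset k, oneH (ρ⁻¹ * τ) * DeltaO τ i := by
          simp_rw [sum_DeltaO_mul, Finset.mul_sum]
          rw [Finset.sum_comm]
          simp_rw [← mul_assoc, ← Finset.sum_mul, hgram]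
      _ = DeltaO ρ i := by
          obtain ⟨τ, hτM, hτ, huniq⟩ := existsUnique_Mset ρ
          rw [Finset.sum_eq_single τ]
          · rw [oneH, if_pos hτ, one_mul, ← DeltaO_mul_hyper ρ _ hτ, mul_inv_cancel_left]
          · intro τ' hτ' hne
            rw [oneH, if_neg fun h => hne (huniq τ' hτ' h), zero_mul]
          · exact fun h => absurd hτM h
  rw [h1, h2, sub_self]

/-! ### The matrix `Rᵀ J R` -/

lemma prod_conj_entries {k N : ℕ} (R A : Matrix (Fin N) (Fin N) ℝ) (i : Fin (2 * k) → Fin N) :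
    ∏ s : Fin k, (Rᵀ * A * R) (i (lo s)) (i (hi s)) =
      ∑ p : Fin (2 * k) → Fin N, (∏ r, A (p (lo r)) (p (hi r))) * ∏ j, R (p j) (i j) := by
  simp_rw [prod_lo_hi, ← Finset.prod_mul_distrib]
  rw [sum_prod_pairs fun s a b => A a b * (R a (i (lo s)) * R b (i (hi s)))]
  refine Finset.prod_congr rfl fun s _ => ?_
  simp only [Matrix.mul_apply, Matrix.transpose_apply, Finset.sum_mul]
  rw [Finset.sum_comm]
  exact Finset.sum_congr rfl fun a _ => Finset.sum_congr rfl fun b _ => by ring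

/-- `diag(I_n, -I_n)` is an orthogonal matrix that conjugates `J` to `-J`. -/
lemma exists_conj_neg (n : ℕ) : ∃ g : OG (2 * n),
    (g : Matrix (Fin (2 * n)) (Fin (2 * n)) ℝ)ᵀ * Jmat ℝ n *
      (g : Matrix (Fin (2 * n)) (Fin (2 * n)) ℝ) = -Jmat ℝ n := by
  let d : Fin (2 * n) → ℝ := fun x => if (x : ℕ) < n then 1 else -1
  have hd : ∀ x, d x * d x = 1 := by intro x; simp only [d]; split_ifs <;> norm_num
  refine ⟨⟨Matrix.diagonal d, (Matrix.mem_orthogonalGroup_iff _ _).2 ?_⟩, ?_⟩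
  · rw [Matrix.diagonal_transpose, Matrix.diagonal_mul_diagonal]
    simp [hd]
  · ext x y
    have hx := x.2
    have hy := y.2
    simp only [Matrix.diagonal_transpose, Matrix.mul_diagonal, Matrix.diagonal_mul,
      Matrix.neg_apply, Jmat, Matrix.of_apply, d]
    split_ifs <;> first | omega | norm_num

/-- Weingarten calculus for class D III, Theorem 5.1:
`Ṽ = Rᵀ J R`. -/
theorem stmt15 (n k : ℕ) (hk : 0 < k) (hnk : k ≤ n)
    (μ : Measure (OG (2 * n))) [IsProbabilityMeasure μ]
    (hμ : ∀ g : OG (2 * n), μ.map (fun x => g * x) = μ)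
    (WgO : Equiv.Perm (Fin (2 * k)) → ℝ)
    (hbi : ∀ (σ ζ ζ' : Equiv.Perm (Fin (2 * k))), IsHyper ζ → IsHyper ζ' →
      WgO (ζ * σ * ζ') = WgO σ)
    (hWg : sconv (fun σ => ((2 * n : ℕ) : ℝ) ^ ccount σ) WgO = oneH) :
    (Even k → ∀ i : Fin (2 * k) → Fin (2 * n),
      ∫ R : OG (2 * n), ∏ s : Fin k,
          ((R : Matrix (Fin (2 * n)) (Fin (2 * n)) ℝ)ᵀ * Jmat ℝ n
            * (R : Matrix (Fin (2 * n)) (Fin (2 * n)) ℝ)) (i (lo s)) (i (hi s)) ∂μ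
        = ∑ σ ∈ Mset k, DeltaO σ i * sconv (TDIII n k) WgO σ) ∧
    (Odd k → ∀ i : Fin (2 * k) → Fin (2 * n),
      ∫ R : OG (2 * n), ∏ s : Fin k,
          ((R : Matrix (Fin (2 * n)) (Fin (2 * n)) ℝ)ᵀ * Jmat ℝ n
            * (R : Matrix (Fin (2 * n)) (Fin (2 * n)) ℝ)) (i (lo s)) (i (hi s)) ∂μ
        = 0) := by
  refine ⟨fun _ i => ?_, fun hodd i => ?_⟩
  · simp_rw [prod_conj_entries]
    rw [integral_finsetSum _ fun p _ => (integrable_prod_entries μ p i).const_mul _]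
    simp_rw [integral_const_mul,
      integral_prod_entries (show k < 2 * n by omega) μ hμ WgO hbi hWg]
    have hT : ∀ σ, ∑ p : Fin (2 * k) → Fin (2 * n),
        (∏ r, Jmat ℝ n (p (lo r)) (p (hi r))) * DeltaO σ p = TDIII n k σ := fun σ =>
      Finset.sum_congr rfl fun p _ => mul_comm _ _
    simp_rw [Finset.mul_sum (Mset k) _ (∏ r, Jmat ℝ n _ _)]
    rw [Finset.sum_comm]
    simp_rw [← mul_assoc, ← Finset.sum_mul, hT, sconv, Finset.mul_sum]
    rw [Finset.sum_comm]
    exact Finset.sum_congr rfl fun τ _ => Finset.sum_congr rfl fun σ _ => by ring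
  · obtain ⟨g, hg⟩ := exists_conj_neg n
    have hcont : Continuous fun R : OG (2 * n) => ∏ s : Fin k,
        ((R : Matrix (Fin (2 * n)) (Fin (2 * n)) ℝ)ᵀ * Jmat ℝ n
          * (R : Matrix (Fin (2 * n)) (Fin (2 * n)) ℝ)) (i (lo s)) (i (hi s)) := by
      refine continuous_finsetProd _ fun s _ => Continuous.matrix_elem ?_ _ _
      have hc : Continuous fun R : OG (2 * n) =>
        (R : Matrix (Fin (2 * n)) (Fin (2 * n)) ℝ) := continuous_subtype_val
      exact (hc.matrix_transpose.mul continuous_const).mul hc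
    have h := integral_left_mul μ hμ _ hcont g
    have hneg : ∀ R : OG (2 * n), (((g * R : OG (2 * n)) :
          Matrix (Fin (2 * n)) (Fin (2 * n)) ℝ)ᵀ * Jmat ℝ n
            * ((g * R : OG (2 * n)) : Matrix (Fin (2 * n)) (Fin (2 * n)) ℝ)) =
        -((R : Matrix (Fin (2 * n)) (Fin (2 * n)) ℝ)ᵀ * Jmat ℝ n
            * (R : Matrix (Fin (2 * n)) (Fin (2 * n)) ℝ)) := by
      intro R
      rw [Submonoid.coe_mul, Matrix.transpose_mul]
      calc _ = (R : Matrix (Fin (2 * n)) (Fin (2 * n)) ℝ)ᵀ *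
            ((g : Matrix (Fin (2 * n)) (Fin (2 * n)) ℝ)ᵀ * Jmat ℝ n *
              (g : Matrix (Fin (2 * n)) (Fin (2 * n)) ℝ)) *
            (R : Matrix (Fin (2 * n)) (Fin (2 * n)) ℝ) := by
            simp only [Matrix.mul_assoc]
        _ = _ := by rw [hg, Matrix.mul_neg, Matrix.neg_mul]
    simp_rw [hneg, Matrix.neg_apply, Finset.prod_neg, Finset.card_univ, Fintype.card_fin,
      hodd.neg_one_pow, neg_one_mul, integral_neg] at h
    linarith

end WgPaper
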